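/- Let A and B be nonzero integers with g = gcd(A, B) > 1, write A = g·a and B = g·b with gcd(a, b) = 1, and let L be a positive integer such that ν_p(L) ≤ ν_p(g) for every prime p dividing g and ν_p(L) ≥ 1 for some prime p dividing g. Then γ(L) = 1. Moreover, if the ℓ-part ℓ = ∏_{p prime, p ∤ g} p^{ν_p(L)} is good with respect to a and b, then L is good with respect to A and B and 𝒦_{(A,B)}(L) = {K ∈ ℕ⁺ : K ≡ r (mod L₀)}, where L₀ = 1 and r = 0 if ℓ ∈ {1, 2}, and L₀ = ord_ℓ(a·b⁻¹) and r = L₀/2 if ℓ ≥ 3. -/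

import Mathlib

/-!
Write `g = gcd(A, B)` and `ℓ` for the `ℓ`-part of `L`. The hypothesis `ν_p(L) ≤ ν_p(g)` for `p ∣ g`
says that `L ∣ g * ℓ`, while `ℓ ∣ L` and `ℓ` is coprime to `g`. Since
`A ^ K + B ^ K = g ^ K * (a ^ K + b ^ K)`, for `K > 0` the condition `L ∣ A ^ K + B ^ K` is
equivalent to `ℓ ∣ a ^ K + b ^ K` (`dvd_iff_ellPart_dvd`).

If `ℓ` is good, coprimality of `a` and `b` makes both of them units modulo `ℓ`, so the condition
reads `u ^ K = -1` with `u = a * b⁻¹`. It holds for every `K` when `ℓ ≤ 2`. For `ℓ ≥ 3` we have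
`-1 ≠ 1`, and `u ^ k = -1` forces the order `n` of `u` to divide `2 * k` but not `k`; hence `n` is
even and `k ≡ n / 2` modulo `n`, so that the solutions are exactly the class of `n / 2`
(`pow_eq_neg_one_iff_modEq`).
-/

open scoped BigOperators

/-- A positive integer `ℓ` is *good* with respect to integers `a`, `b` if
`ℓ ∣ a ^ k + b ^ k` for some positive integer `k`. -/
def IsGood (a b : ℤ) (ℓ : ℕ) : Prop :=
  ∃ k : ℕ, 0 < k ∧ (ℓ : ℤ) ∣ a ^ k + b ^ k

/-- The multiplicative order of `a * b⁻¹` modulo `n`. -/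
noncomputable def ordAB (a b : ℤ) (n : ℕ) : ℕ :=
  orderOf ((a : ZMod n) * (b : ZMod n)⁻¹)

/-- The `ℓ`-part of `L` relative to `g`: the product of `p ^ ν_p(L)` over primes `p ∤ g`. -/
def ellPart (g L : ℕ) : ℕ :=
  ∏ p ∈ L.primeFactors.filter fun p => ¬ p ∣ g, p ^ L.factorization p

/-- The threshold `γ(L) = max_{p ∣ g} ⌈ν_p(L) / ν_p(g)⌉` (with `γ(L) = 0` when `g = 1`). -/
def gammaL (g L : ℕ) : ℕ :=
  g.primeFactors.sup fun p => (L.factorization p + g.factorization p - 1) / g.factorization p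

lemma ellPart_dvd (g : ℕ) {L : ℕ} (hL : L ≠ 0) : ellPart g L ∣ L := by
  conv_rhs => rw [← Nat.prod_factorization_pow_eq_self hL]
  exact Finset.prod_dvd_prod_of_subset _ _ _ (Finset.filter_subset _ _)

lemma ellPart_coprime (g L : ℕ) : Nat.Coprime (ellPart g L) g := by
  refine Nat.Coprime.prod_left fun p hp => ?_
  rw [Finset.mem_filter] at hp
  exact Nat.Coprime.pow_left _
    ((Nat.Prime.coprime_iff_not_dvd (Nat.prime_of_mem_primeFactors hp.1)).2 hp.2)

lemma dvd_mul_ellPart {g L : ℕ} (hg : g ≠ 0) (hL : L ≠ 0)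
    (hle : ∀ p : ℕ, p.Prime → p ∣ g → L.factorization p ≤ g.factorization p) :
    L ∣ g * ellPart g L := by
  have hl : ellPart g L ≠ 0 := fun h => hL (by simpa [h] using ellPart_dvd g hL)
  rw [← Nat.factorization_prime_le_iff_dvd hL (mul_ne_zero hg hl)]
  intro p hp
  by_cases hpL : p ∣ L
  swap
  · rw [Nat.factorization_eq_zero_of_not_dvd hpL]; exact Nat.zero_le _
  rw [← hp.pow_dvd_iff_le_factorization (mul_ne_zero hg hl)]
  by_cases hpg : p ∣ g
  · exact Dvd.dvd.mul_right ((hp.pow_dvd_iff_le_factorization hg).2 (hle p hp hpg)) _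
  · refine Dvd.dvd.mul_left ?_ _
    exact Finset.dvd_prod_of_mem (fun p => p ^ L.factorization p)
      (Finset.mem_filter.2 ⟨Nat.mem_primeFactors.2 ⟨hp, hpL, hL⟩, hpg⟩)

/-- Only the `ℓ`-part matters: the primes dividing `g` are absorbed by the factor `g ^ K`. -/
lemma dvd_iff_ellPart_dvd {g L : ℕ} (hg : g ≠ 0) (hL : L ≠ 0)
    (hle : ∀ p : ℕ, p.Prime → p ∣ g → L.factorization p ≤ g.factorization p)
    (a b : ℤ) {K : ℕ} (hK : 0 < K) :
    (L : ℤ) ∣ ((g : ℤ) * a) ^ K + ((g : ℤ) * b) ^ K ↔ (ellPart g L : ℤ) ∣ a ^ K + b ^ K := by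
  have hfac : ((g : ℤ) * a) ^ K + ((g : ℤ) * b) ^ K = (g : ℤ) ^ K * (a ^ K + b ^ K) := by ring
  rw [hfac]
  constructor
  · intro h
    have h1 : (ellPart g L : ℤ) ∣ (g : ℤ) ^ K * (a ^ K + b ^ K) :=
      (Int.natCast_dvd_natCast.2 (ellPart_dvd g hL)).trans h
    exact ((Nat.isCoprime_iff_coprime.2 (ellPart_coprime g L)).pow_right).dvd_of_dvd_mul_left h1
  · intro h
    have h1 : (L : ℤ) ∣ (g : ℤ) * (ellPart g L : ℤ) := by
      exact_mod_cast dvd_mul_ellPart hg hL hle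
    exact h1.trans (mul_dvd_mul (dvd_pow_self _ hK.ne') h)

lemma gammaL_eq_one {g L : ℕ} (hg : g ≠ 0)
    (hle : ∀ p : ℕ, p.Prime → p ∣ g → L.factorization p ≤ g.factorization p)
    (hex : ∃ p : ℕ, p.Prime ∧ p ∣ g ∧ 1 ≤ L.factorization p) : gammaL g L = 1 := by
  apply le_antisymm
  · refine Finset.sup_le fun p hp => ?_
    have hpp := Nat.prime_of_mem_primeFactors hp
    have hpg := Nat.dvd_of_mem_primeFactors hp
    have h0 := hpp.factorization_pos_of_dvd hg hpg
    have h1 := hle p hpp hpg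
    rw [← Nat.lt_succ_iff, Nat.div_lt_iff_lt_mul h0]
    omega
  · obtain ⟨p, hpp, hpg, h1⟩ := hex
    have h0 := hpp.factorization_pos_of_dvd hg hpg
    refine le_trans ?_ (Finset.le_sup (f := fun p =>
      (L.factorization p + g.factorization p - 1) / g.factorization p)
      (Nat.mem_primeFactors.2 ⟨hpp, hpg, hg⟩))
    rw [Nat.le_div_iff_mul_le h0]
    omega

/-- If a power of `u` is `-1 ≠ 1`, then the exponents giving `-1` are those congruent to half the
order of `u`. -/
lemma pow_eq_neg_one_iff_modEq {G : Type*} [Group G] [HasDistribNeg G] (hne : (-1 : G) ≠ 1)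
    {u : G} {k : ℕ} (hk : u ^ k = -1) (K : ℕ) :
    u ^ K = -1 ↔ K ≡ orderOf u / 2 [MOD orderOf u] := by
  have h2 : orderOf u ∣ 2 * k := by
    apply orderOf_dvd_of_pow_eq_one
    rw [mul_comm, pow_mul, hk, neg_one_sq]
  have h1 : ¬ orderOf u ∣ k := fun h => hne (by rw [← hk, orderOf_dvd_iff_pow_eq_one.1 h])
  have hmod : k ≡ orderOf u / 2 [MOD orderOf u] := by
    generalize orderOf u = n at h1 h2
    obtain ⟨c, hc⟩ := h2
    -- An even cofactor would give `n ∣ k`, so `c` is odd and `n` is even.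
    rcases Nat.even_or_odd' c with ⟨d, rfl | rfl⟩
    · exact absurd ⟨d, by linarith⟩ h1
    · obtain ⟨m, rfl⟩ : 2 ∣ n := by
        have h : 2 ∣ n * (2 * d + 1) := ⟨k, hc.symm⟩
        rcases Nat.prime_two.dvd_mul.1 h with h | h
        · exact h
        · omega
      have hkm : k = m + 2 * m * d := by linarith
      rw [hkm, Nat.mul_div_cancel_left _ (by norm_num)]
      simp [Nat.ModEq]
  rw [← hk, pow_eq_pow_iff_modEq]
  exact ⟨fun h => h.trans hmod, fun h => h.trans hmod.symm⟩

/-- Goodness of `n` makes `b` a unit modulo `n`; by symmetry the same holds for `a`. -/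
lemma isCoprime_of_dvd_pow_add_pow {a b : ℤ} (hab : IsCoprime a b) {n : ℤ} {k : ℕ} (hk : 0 < k)
    (h : n ∣ a ^ k + b ^ k) : IsCoprime b n := by
  have h1 : IsCoprime (b ^ k) (a ^ k + b ^ k) := by
    simpa using (hab.symm.pow (m := k) (n := k)).add_mul_left_right 1
  exact (IsCoprime.pow_left_iff hk).1 (h1.of_isCoprime_of_dvd_right h)

/-- The solution set for the coprime pair `a`, `b` and modulus `n ≥ 3`. -/
lemma dvd_iff_modEq_ordAB {a b : ℤ} (hab : IsCoprime a b) {n : ℕ} (hn : 3 ≤ n)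
    (hgood : IsGood a b n) (K : ℕ) :
    (n : ℤ) ∣ a ^ K + b ^ K ↔ K ≡ ordAB a b n / 2 [MOD ordAB a b n] := by
  obtain ⟨k, hk, hdvd⟩ := hgood
  have hb := (ZMod.coe_int_isUnit_iff_isCoprime b n).2
    (isCoprime_of_dvd_pow_add_pow hab hk hdvd).symm
  have ha := (ZMod.coe_int_isUnit_iff_isCoprime a n).2
    (isCoprime_of_dvd_pow_add_pow hab.symm hk (by rwa [add_comm])).symm
  obtain ⟨v, hv⟩ := hb
  obtain ⟨w, hw⟩ := ha
  have hord : ordAB a b n = orderOf (w * v⁻¹) := by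
    rw [ordAB, ← hv, ← hw, ← orderOf_units, Units.val_mul, ZMod.inv_coe_unit]
  have key : ∀ j : ℕ, (n : ℤ) ∣ a ^ j + b ^ j ↔ (w * v⁻¹) ^ j = -1 := by
    intro j
    rw [← ZMod.intCast_zmod_eq_zero_iff_dvd]
    push_cast
    rw [← hv, ← hw, mul_pow, inv_pow, mul_inv_eq_iff_eq_mul, Units.ext_iff]
    push_cast
    rw [neg_one_mul, eq_neg_iff_add_eq_zero]
  have : Fact (2 < n) := ⟨hn⟩
  have hne : (-1 : (ZMod n)ˣ) ≠ 1 := by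
    intro h
    apply ZMod.neg_one_ne_one (n := n)
    simpa using congrArg Units.val h
  rw [key, hord]
  exact pow_eq_neg_one_iff_modEq hne ((key k).1 hdvd) K

lemma two_dvd_pow_add_pow {a b : ℤ} (hab : IsCoprime a b) (hgood : IsGood a b 2) (K : ℕ) :
    (2 : ℤ) ∣ a ^ K + b ^ K := by
  obtain ⟨k, hk, hdvd⟩ := hgood
  have hb := isCoprime_of_dvd_pow_add_pow hab hk hdvd
  have ha := isCoprime_of_dvd_pow_add_pow hab.symm hk (add_comm (a ^ k) (b ^ k) ▸ hdvd)
  push_cast at ha hb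
  rw [isCoprime_comm, Int.isCoprime_two_left] at ha hb
  exact (ha.pow.add_odd hb.pow).two_dvd

theorem stmt19 (A B : ℤ) (hA : A ≠ 0) (hB : B ≠ 0) (a b : ℤ)
    (hg1 : 1 < Int.gcd A B)
    (hAa : A = (Int.gcd A B : ℤ) * a) (hBb : B = (Int.gcd A B : ℤ) * b)
    (hab : IsCoprime a b) (L : ℕ) (hL : 0 < L)
    (hle : ∀ p : ℕ, p.Prime → p ∣ Int.gcd A B →
      L.factorization p ≤ (Int.gcd A B).factorization p)
    (hex : ∃ p : ℕ, p.Prime ∧ p ∣ Int.gcd A B ∧ 1 ≤ L.factorization p)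
    (L₀ r : ℕ)
    (h12 : ellPart (Int.gcd A B) L = 1 ∨ ellPart (Int.gcd A B) L = 2 →
      L₀ = 1 ∧ r = 0)
    (h3 : 3 ≤ ellPart (Int.gcd A B) L →
      L₀ = ordAB a b (ellPart (Int.gcd A B) L) ∧ r = L₀ / 2) :
    gammaL (Int.gcd A B) L = 1 ∧
    (IsGood a b (ellPart (Int.gcd A B) L) →
      IsGood A B L ∧
      {K : ℕ | 0 < K ∧ (L : ℤ) ∣ A ^ K + B ^ K} =
        {K : ℕ | 0 < K ∧ K ≡ r [MOD L₀]}) := by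
  have hg : Int.gcd A B ≠ 0 := by omega
  refine ⟨gammaL_eq_one hg hle hex, fun hgood => ?_⟩
  have hiff : ∀ K : ℕ, 0 < K →
      ((L : ℤ) ∣ A ^ K + B ^ K ↔ (ellPart (Int.gcd A B) L : ℤ) ∣ a ^ K + b ^ K) := by
    intro K hK
    have h := dvd_iff_ellPart_dvd hg hL.ne' hle a b hK
    rwa [← hAa, ← hBb] at h
  have hl0 : 0 < ellPart (Int.gcd A B) L := Nat.pos_of_dvd_of_pos (ellPart_dvd _ hL.ne') hL
  constructor
  · obtain ⟨k, hk, hd⟩ := hgood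
    exact ⟨k, hk, (hiff k hk).2 hd⟩
  ext K
  refine and_congr_right fun hK => ?_
  rw [hiff K hK]
  generalize ellPart (Int.gcd A B) L = n at *
  rcases Nat.lt_or_ge n 3 with hn | hn
  · obtain ⟨rfl, rfl⟩ := h12 (by omega)
    refine iff_of_true ?_ (Nat.modEq_one)
    obtain rfl | rfl : n = 1 ∨ n = 2 := by omega
    · simp
    · exact_mod_cast two_dvd_pow_add_pow hab hgood K
  · obtain ⟨rfl, rfl⟩ := h3 hn
    exact dvd_iff_modEq_ordAB hab hn hgood K
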